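/- arXiv:0903.4969 — 3 statements merged into one kernel-verified Lean document; each statement's English description precedes it below -/
import Mathlib

section
/- In 𝔽₂[t₁,…,t₆], the product ∏_{1≤j<k≤6} (1 + t_j + t_k) is congruent to (1 + e₄ + e₆)² modulo the ideal generated by e₁, e₂, e₃, e₅. -/
open MvPolynomial Finset

/-- The `i`-th elementary symmetric polynomial in `𝔽₂[t₁,…,t₆]`. -/
noncomputable def e (i : ℕ) : MvPolynomial (Fin 6) (ZMod 2) :=
  esymm (Fin 6) (ZMod 2) i

theorem aux_four {A : Type*} [CommRing A] (h2 : (2 : A) = 0) (a b c d s1 s2 s3 s4 : A)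
    (h1 : s1 = a + b + c + d) (hs2 : s2 = a*b+a*c+a*d+b*c+b*d+c*d)
    (h3 : s3 = a*b*c+a*b*d+a*c*d+b*c*d) (h4 : s4 = a*b*c*d) :
    (1+a+b)*(1+a+c)*(1+a+d)*(1+b+c)*(1+b+d)*(1+c+d)
      = (1+s1+s2)^3 + s2*(1+s1+s2)^2 + s1*s3*(1+s1+s2) + s3^2 + s1^2*s4 := by
  subst h1 hs2 h3 h4
  grind

theorem aux_quartic {A : Type*} [CommRing A] (a b c d s1 s2 s3 s4 x : A)
    (h1 : s1 = a + b + c + d) (hs2 : s2 = a*b+a*c+a*d+b*c+b*d+c*d)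
    (h3 : s3 = a*b*c+a*b*d+a*c*d+b*c*d) (h4 : s4 = a*b*c*d) :
    (1+a+x)*(1+b+x)*(1+c+x)*(1+d+x)
      = (1+x)^4 + s1*(1+x)^3 + s2*(1+x)^2 + s3*(1+x) + s4 := by
  subst h1 hs2 h3 h4
  ring

theorem aux_lin {A : Type*} [CommRing A] (h2 : (2 : A) = 0) (x y u v s : A)
    (hu : u = x + y) (hv : v = x * y) :
    (1+x)^4 + u*(1+x)^3 + (v+u^2)*(1+x)^2 + u^3*(1+x) + s
      = (u+u^2)*(1+x) + ((1+u+u^2)*(1+u+v)+s) := by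
  subst hu hv
  grind

theorem aux_final {A : Type*} [CommRing A] (h2 : (2 : A) = 0) (u v s : A)
    (h : u*s + v*u^3 = 0) :
    (1+u) * ((1+u+(v+u^2))^3 + (v+u^2)*(1+u+(v+u^2))^2 + u*u^3*(1+u+(v+u^2)) + (u^3)^2 + u^2*s)
      * ((u+u^2)^2*(1+u+v) + (u+u^2)*((1+u+u^2)*(1+u+v)+s)*u + ((1+u+u^2)*(1+u+v)+s)^2)
      = (1 + (s+u^4+v^2+v*u^2) + v*s)^2 := by
  grind

theorem aux_prod {A : Type*} [CommRing A] (h2 : (2 : A) = 0) (x y u v P Q : A)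
    (hu : u = x + y) (hv : v = x * y) :
    (P*(1+x)+Q)*(P*(1+y)+Q) = P^2*(1+u+v) + P*Q*u + Q^2 := by
  subst hu hv
  linear_combination P*Q*h2

theorem aux_six {A : Type*} [CommRing A] (h2 : (2 : A) = 0) (a b c d x y u v s1 s2 s3 s : A)
    (h1 : s1 = a + b + c + d) (hs2 : s2 = a*b+a*c+a*d+b*c+b*d+c*d)
    (h3 : s3 = a*b*c+a*b*d+a*c*d+b*c*d) (h4 : s = a*b*c*d)
    (hu : u = x + y) (hv : v = x * y)
    (e1 : s1 + u = 0) (e2 : s2 + u*s1 + v = 0) (e3 : s3 + u*s2 + v*s1 = 0)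
    (e5 : u*s + v*s3 = 0) :
    ((1+a+b)*(1+a+c)*(1+a+d)*(1+b+c)*(1+b+d)*(1+c+d))
      * ((1+a+x)*(1+b+x)*(1+c+x)*(1+d+x)) * ((1+a+y)*(1+b+y)*(1+c+y)*(1+d+y)) * (1+x+y)
      = (1 + (s + u*s3 + v*s2) + v*s)^2 := by
  have k1 : s1 = u := by linear_combination e1 - u*h2
  have k2 : s2 = v + u^2 := by
    rw [k1] at e2
    linear_combination e2 - (u^2+v)*h2
  have k3 : s3 = u^3 := by
    rw [k1, k2] at e3
    linear_combination e3 - (u^3+u*v)*h2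
  rw [aux_four h2 a b c d s1 s2 s3 s h1 hs2 h3 h4, aux_quartic a b c d s1 s2 s3 s x h1 hs2 h3 h4,
    aux_quartic a b c d s1 s2 s3 s y h1 hs2 h3 h4, k1, k2, k3, aux_lin h2 x y u v s hu hv,
    aux_lin h2 y x u v s (by rw [hu]; ring) (by rw [hv]; ring)]
  have hp := aux_prod h2 x y u v (u+u^2) ((1+u+u^2)*(1+u+v)+s) hu hv
  have hf := aux_final h2 u v s (by rw [k3] at e5; exact e5)
  have hxy : 1 + x + y = 1 + u := by rw [hu]; ring
  rw [hxy, mul_assoc (_ + u ^ 2 * s), hp]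
  linear_combination hf

theorem aux_esymm_cons {A : Type*} [CommRing A] (a : A) (s : Multiset A) (n : ℕ) :
    (a ::ₘ s).esymm (n+1) = s.esymm (n+1) + a * s.esymm n := by
  simp [Multiset.esymm, Multiset.powersetCard_cons, Multiset.sum_map_mul_left]

theorem aux_esymm_nil {A : Type*} [CommRing A] (n : ℕ) :
    (0 : Multiset A).esymm (n+1) = 0 := by
  simp [Multiset.esymm, Multiset.powersetCard_zero_right]

theorem aux_esymm_zero {A : Type*} [CommRing A] (s : Multiset A) :
    s.esymm 0 = 1 := by
  simp [Multiset.esymm]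

theorem aux_e (n : ℕ) : e n =
    (X 0 ::ₘ X 1 ::ₘ X 2 ::ₘ X 3 ::ₘ X 4 ::ₘ X 5 ::ₘ 0 :
      Multiset (MvPolynomial (Fin 6) (ZMod 2))).esymm n := by
  rw [e, esymm_eq_multiset_esymm]
  rfl

/-- in `𝔽₂[t₁,…,t₆]`, `∏_{1≤j<k≤6} (1 + t_j + t_k)` is congruent
to `(1 + e₄ + e₆)²` modulo the ideal `(e₁, e₂, e₃, e₅)`. -/
theorem lambda2_spin6 :
    (∏ p ∈ univ.filter (fun p : Fin 6 × Fin 6 => p.1 < p.2),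
        (1 + X p.1 + X p.2) : MvPolynomial (Fin 6) (ZMod 2))
      - (1 + e 4 + e 6) ^ 2 ∈ Ideal.span {e 1, e 2, e 3, e 5} := by
  have hprod : (∏ p ∈ univ.filter (fun p : Fin 6 × Fin 6 => p.1 < p.2),
        (1 + X p.1 + X p.2) : MvPolynomial (Fin 6) (ZMod 2)) =
      ((1+X 0+X 1)*(1+X 0+X 2)*(1+X 0+X 3)*(1+X 1+X 2)*(1+X 1+X 3)*(1+X 2+X 3))
      * ((1+X 0+X 4)*(1+X 1+X 4)*(1+X 2+X 4)*(1+X 3+X 4))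
      * ((1+X 0+X 5)*(1+X 1+X 5)*(1+X 2+X 5)*(1+X 3+X 5)) * (1+X 4+X 5) := by
    rw [Finset.prod_filter, Fintype.prod_prod_type]
    simp only [Fin.prod_univ_six, Fin.reduceLT, if_true, if_false, lt_self_iff_false,
      one_mul, mul_one]
    ac_rfl
  rw [hprod]
  set I := Ideal.span {e 1, e 2, e 3, e 5} with hI
  let q := Ideal.Quotient.mk I
  have m1 : q (e 1) = 0 := Ideal.Quotient.eq_zero_iff_mem.2 (Ideal.subset_span (by simp))
  have m2 : q (e 2) = 0 := Ideal.Quotient.eq_zero_iff_mem.2 (Ideal.subset_span (by simp))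
  have m3 : q (e 3) = 0 := Ideal.Quotient.eq_zero_iff_mem.2 (Ideal.subset_span (by simp))
  have m5 : q (e 5) = 0 := Ideal.Quotient.eq_zero_iff_mem.2 (Ideal.subset_span (by simp))
  have h2 : (2 : MvPolynomial (Fin 6) (ZMod 2) ⧸ I) = 0 := by
    have : (2 : MvPolynomial (Fin 6) (ZMod 2)) = 0 := CharTwo.two_eq_zero
    rw [← map_ofNat q 2, this, map_zero]
  rw [← Ideal.Quotient.eq_zero_iff_mem]
  change q _ = 0
  rw [map_sub, sub_eq_zero]
  have n4 := congrArg q (aux_e 4)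
  have n6 := congrArg q (aux_e 6)
  rw [aux_e] at m1 m2 m3 m5
  simp only [aux_esymm_cons, aux_esymm_nil, aux_esymm_zero, map_add, map_mul, map_one,
    map_zero, Nat.reduceAdd, zero_add, mul_zero, mul_one, add_zero] at m1 m2 m3 m5 n4 n6
  simp only [map_mul, map_add, map_one, map_pow, n4, n6]
  rw [aux_six h2 (q (X 0)) (q (X 1)) (q (X 2)) (q (X 3)) (q (X 4)) (q (X 5)) _ _ _ _ _ _
    rfl rfl rfl rfl rfl rfl]
  · ring
  · linear_combination m1
  · linear_combination m2
  · linear_combination m3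
  · linear_combination m5
end

section
/- In 𝔽₂[t₁,…,t₆], the product ∏_{1≤j<k≤6} (1 + t_j + t_k) is congruent to 1 + (e₃e₅ + e₄² + e₂⁴) + (e₂e₅² + e₃²e₆ + e₃e₄e₅ + e₂²e₃e₅ + e₂²e₄² + e₃⁴ + e₆²) + (e₃e₅e₆ + e₄e₅² + e₂²e₅² + e₂e₃²e₆ + e₂e₃e₄e₅ + e₃³e₅ + e₃²e₄²) + (e₅³ + e₂e₃e₅² + e₃³e₆ + e₃²e₄e₅) modulo the ideal generated by e₁. -/
open MvPolynomial Finset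

/-- The final identity, in terms of the elementary symmetric functions `s, p, r` of `t₁,t₂,t₃`
and `s, q, w` of `t₄,t₅,t₆`. -/
lemma final_identity {R : Type*} [CommRing R] [CharP R 2] (s p r q w u v e2 e3 e4 e5 e6 : R)
    (hu : u = 1 + p + q) (hv : v = 1 + s + r + q + w)
    (h2 : e2 = s ^ 2 + p + q) (h3 : e3 = r + w + s * (p + q))
    (h4 : e4 = s * (r + w) + p * q) (h5 : e5 = p * w + r * q) (h6 : e6 = r * w) :
    ((1 + s) ^ 2 + p * (1 + s) + r) * ((1 + s) ^ 2 + q * (1 + s) + w) *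
      (v ^ 3 + u * s * v ^ 2 + s ^ 2 * v ^ 2 + u ^ 2 * p * v + u * v * (s * p - 3 * r) + p ^ 2 * v
        + u ^ 3 * r + u ^ 2 * s * r + u * p * r + r ^ 2 - 2 * p * v ^ 2 - 2 * s * r * v) =
    1 + (e3 * e5 + e4 ^ 2 + e2 ^ 4)
      + (e2 * e5 ^ 2 + e3 ^ 2 * e6 + e3 * e4 * e5
          + e2 ^ 2 * e3 * e5 + e2 ^ 2 * e4 ^ 2 + e3 ^ 4 + e6 ^ 2)
      + (e3 * e5 * e6 + e4 * e5 ^ 2 + e2 ^ 2 * e5 ^ 2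
          + e2 * e3 ^ 2 * e6 + e2 * e3 * e4 * e5
          + e3 ^ 3 * e5 + e3 ^ 2 * e4 ^ 2)
      + (e5 ^ 3 + e2 * e3 * e5 ^ 2 + e3 ^ 3 * e6 + e3 ^ 2 * e4 * e5) := by
  subst hu hv h2 h3 h4 h5 h6
  grind

/-- The product of a monic quadratic over three points. -/
lemma prod_quadratic {R : Type*} [CommRing R] (a b c u v : R) :
    (a ^ 2 + u * a + v) * (b ^ 2 + u * b + v) * (c ^ 2 + u * c + v) =
      (v ^ 3 + u * (a + b + c) * v ^ 2 + (a + b + c) ^ 2 * v ^ 2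
        + u ^ 2 * (a * b + a * c + b * c) * v
        + u * v * ((a + b + c) * (a * b + a * c + b * c) - 3 * (a * b * c))
        + (a * b + a * c + b * c) ^ 2 * v
        + u ^ 3 * (a * b * c) + u ^ 2 * (a + b + c) * (a * b * c)
        + u * (a * b + a * c + b * c) * (a * b * c) + (a * b * c) ^ 2
        - 2 * (a * b + a * c + b * c) * v ^ 2 - 2 * (a + b + c) * (a * b * c) * v) := by
  ring

/-- Products within one block of three variables. -/
lemma prod_block {R : Type*} [CommRing R] (h2 : (2 : R) = 0) (a b c : R) :
    (1 + a + b) * (1 + a + c) * (1 + b + c) =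
      (1 + (a + b + c)) ^ 2 + (a * b + a * c + b * c) * (1 + (a + b + c)) + a * b * c := by
  linear_combination (-(a * b * c)) * h2

/-- Products of one variable against the opposite block. -/
lemma prod_cross {R : Type*} [CommRing R] (h2 : (2 : R) = 0) (a b c x y z s p r : R)
    (hs : x + y + z = s) (hs' : s = a + b + c) (hp : p = a * b + a * c + b * c)
    (hr : r = a * b * c) :
    (1 + a + x) * (1 + a + y) * (1 + a + z) =
      a ^ 2 + (1 + p + (x * y + x * z + y * z)) * a
        + (1 + s + r + (x * y + x * z + y * z) + x * y * z) := by
  subst hs' hp hr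
  linear_combination (1 + a) ^ 2 * hs + (a ^ 3 + 2 * a ^ 2 + a + a * b + a * c - a * b * c) * h2

/-- The congruence in an arbitrary commutative ring of characteristic two. -/
lemma main_char_two {R : Type*} [CommRing R] [CharP R 2] (a b c x y z e2 e3 e4 e5 e6 : R)
    (hs : x + y + z = a + b + c)
    (he2 : e2 = (a + b + c) ^ 2 + (a * b + a * c + b * c) + (x * y + x * z + y * z))
    (he3 : e3 = a * b * c + x * y * z
      + (a + b + c) * ((a * b + a * c + b * c) + (x * y + x * z + y * z)))
    (he4 : e4 = (a + b + c) * (a * b * c + x * y * z)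
      + (a * b + a * c + b * c) * (x * y + x * z + y * z))
    (he5 : e5 = (a * b + a * c + b * c) * (x * y * z) + a * b * c * (x * y + x * z + y * z))
    (he6 : e6 = a * b * c * (x * y * z)) :
    ((1 + a + b) * (1 + a + c) * (1 + b + c)) * ((1 + x + y) * (1 + x + z) * (1 + y + z)) *
      (((1 + a + x) * (1 + a + y) * (1 + a + z)) * ((1 + b + x) * (1 + b + y) * (1 + b + z)) *
        ((1 + c + x) * (1 + c + y) * (1 + c + z))) =
    1 + (e3 * e5 + e4 ^ 2 + e2 ^ 4)
      + (e2 * e5 ^ 2 + e3 ^ 2 * e6 + e3 * e4 * e5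
          + e2 ^ 2 * e3 * e5 + e2 ^ 2 * e4 ^ 2 + e3 ^ 4 + e6 ^ 2)
      + (e3 * e5 * e6 + e4 * e5 ^ 2 + e2 ^ 2 * e5 ^ 2
          + e2 * e3 ^ 2 * e6 + e2 * e3 * e4 * e5
          + e3 ^ 3 * e5 + e3 ^ 2 * e4 ^ 2)
      + (e5 ^ 3 + e2 * e3 * e5 ^ 2 + e3 ^ 3 * e6 + e3 ^ 2 * e4 * e5) := by
  have h2 : (2 : R) = 0 := CharTwo.two_eq_zero
  rw [← final_identity (a + b + c) (a * b + a * c + b * c) (a * b * c) (x * y + x * z + y * z)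
    (x * y * z) _ _ e2 e3 e4 e5 e6 rfl rfl he2 he3 he4 he5 he6, ← prod_quadratic,
    prod_block h2 a b c, prod_block h2 x y z, prod_cross h2 a b c x y z _ _ _ hs rfl rfl rfl,
    prod_cross h2 b a c x y z _ (a * b + a * c + b * c) (a * b * c) hs
      (by ring) (by ring) (by ring),
    prod_cross h2 c a b x y z _ (a * b + a * c + b * c) (a * b * c) hs
      (by ring) (by ring) (by ring), hs]

/-- Elementary symmetric polynomials in six variables as multiset symmetric functions. -/
lemma e_eq (i : ℕ) : e i = Multiset.esymm
    (X 0 ::ₘ X 1 ::ₘ X 2 ::ₘ X 3 ::ₘ X 4 ::ₘ X 5 ::ₘ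
      (0 : Multiset (MvPolynomial (Fin 6) (ZMod 2)))) i := by
  rw [e, MvPolynomial.esymm_eq_multiset_esymm]
  rfl

lemma esymm_cons_succ {R : Type*} [CommRing R] (a : R) (s : Multiset R) (n : ℕ) :
    (a ::ₘ s).esymm (n + 1) = s.esymm (n + 1) + a * s.esymm n := by
  simp [Multiset.esymm, Multiset.powersetCard_cons, Multiset.sum_map_mul_left]

lemma esymm_nil_succ {R : Type*} [CommRing R] (n : ℕ) :
    (0 : Multiset R).esymm (n + 1) = 0 := by
  simp [Multiset.esymm, Multiset.powersetCard_zero_right]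

lemma esymm_at_zero {R : Type*} [CommRing R] (s : Multiset R) : s.esymm 0 = 1 := by
  simp [Multiset.esymm]

/-- Listing the fifteen pairs. -/
lemma prod_pairs {R : Type*} [CommRing R] (F : Fin 6 × Fin 6 → R) :
    ∏ p ∈ univ.filter (fun p : Fin 6 × Fin 6 => p.1 < p.2), F p =
    (F (0, 1) * F (0, 2) * F (1, 2)) * (F (3, 4) * F (3, 5) * F (4, 5)) *
      ((F (0, 3) * F (0, 4) * F (0, 5)) * (F (1, 3) * F (1, 4) * F (1, 5)) *
        (F (2, 3) * F (2, 4) * F (2, 5))) := by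
  have hp : (univ.filter (fun p : Fin 6 × Fin 6 => p.1 < p.2)) =
      {(0, 1), (0, 2), (0, 3), (0, 4), (0, 5), (1, 2), (1, 3), (1, 4), (1, 5), (2, 3), (2, 4),
        (2, 5), (3, 4), (3, 5), (4, 5)} := by decide
  rw [hp]
  repeat rw [Finset.prod_insert (by decide)]
  rw [Finset.prod_singleton]
  ring

/-- The congruence for any homomorphism to a ring of characteristic two killing `e₁`. -/
lemma hom_version {R : Type*} [CommRing R] [CharP R 2]
    (φ : MvPolynomial (Fin 6) (ZMod 2) →+* R) (h1 : φ (e 1) = 0) :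
    ∏ p ∈ univ.filter (fun p : Fin 6 × Fin 6 => p.1 < p.2), (1 + φ (X p.1) + φ (X p.2)) =
    1 + (φ (e 3) * φ (e 5) + φ (e 4) ^ 2 + φ (e 2) ^ 4)
      + (φ (e 2) * φ (e 5) ^ 2 + φ (e 3) ^ 2 * φ (e 6) + φ (e 3) * φ (e 4) * φ (e 5)
          + φ (e 2) ^ 2 * φ (e 3) * φ (e 5) + φ (e 2) ^ 2 * φ (e 4) ^ 2 + φ (e 3) ^ 4 + φ (e 6) ^ 2)
      + (φ (e 3) * φ (e 5) * φ (e 6) + φ (e 4) * φ (e 5) ^ 2 + φ (e 2) ^ 2 * φ (e 5) ^ 2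
          + φ (e 2) * φ (e 3) ^ 2 * φ (e 6) + φ (e 2) * φ (e 3) * φ (e 4) * φ (e 5)
          + φ (e 3) ^ 3 * φ (e 5) + φ (e 3) ^ 2 * φ (e 4) ^ 2)
      + (φ (e 5) ^ 3 + φ (e 2) * φ (e 3) * φ (e 5) ^ 2 + φ (e 3) ^ 3 * φ (e 6) + φ (e 3) ^ 2 * φ (e 4) * φ (e 5)) := by
  have h2 : (2 : R) = 0 := CharTwo.two_eq_zero
  have hsum : φ (X 0) + φ (X 1) + φ (X 2) + φ (X 3) + φ (X 4) + φ (X 5) = 0 := by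
    rw [← h1, e_eq 1]
    simp only [esymm_cons_succ, esymm_nil_succ, esymm_at_zero, map_add, map_mul, map_one, map_zero]
    ring
  have hs : φ (X 3) + φ (X 4) + φ (X 5) = φ (X 0) + φ (X 1) + φ (X 2) := by
    linear_combination hsum - (φ (X 0) + φ (X 1) + φ (X 2)) * h2
  rw [prod_pairs]
  exact main_char_two (φ (X 0)) (φ (X 1)) (φ (X 2)) (φ (X 3)) (φ (X 4)) (φ (X 5))
    (φ (e 2)) (φ (e 3)) (φ (e 4)) (φ (e 5)) (φ (e 6)) hs
    (by
      rw [e_eq 2]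
      simp only [esymm_cons_succ, esymm_nil_succ, esymm_at_zero, map_add, map_mul, map_one, map_zero]
      linear_combination (((φ (X 0) + φ (X 1) + φ (X 2))) * hs))
    (by
      rw [e_eq 3]
      simp only [esymm_cons_succ, esymm_nil_succ, esymm_at_zero, map_add, map_mul, map_one, map_zero]
      linear_combination ((φ (X 0) * φ (X 1) + φ (X 0) * φ (X 2) + φ (X 1) * φ (X 2)) * hs))
    (by
      rw [e_eq 4]
      simp only [esymm_cons_succ, esymm_nil_succ, esymm_at_zero, map_add, map_mul, map_one, map_zero]
      linear_combination ((φ (X 0) * φ (X 1) * φ (X 2)) * hs))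
    (by
      rw [e_eq 5]
      simp only [esymm_cons_succ, esymm_nil_succ, esymm_at_zero, map_add, map_mul, map_one, map_zero]
      linear_combination (0 * hs))
    (by
      rw [e_eq 6]
      simp only [esymm_cons_succ, esymm_nil_succ, esymm_at_zero, map_add, map_mul, map_one, map_zero]
      linear_combination (0 * hs))

/-- in `𝔽₂[t₁,…,t₆]`, `∏_{1≤j<k≤6} (1 + t_j + t_k)` is congruent
to the displayed polynomial in `e₂,…,e₆` modulo the ideal `(e₁)`; this is the
mod 2 total Chern class of `λ² : SU(6) → SU(15)`. -/
theorem chern_lambda2_SU6 :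
    (∏ p ∈ univ.filter (fun p : Fin 6 × Fin 6 => p.1 < p.2),
        (1 + X p.1 + X p.2) : MvPolynomial (Fin 6) (ZMod 2))
      - (1 + (e 3 * e 5 + e 4 ^ 2 + e 2 ^ 4)
          + (e 2 * e 5 ^ 2 + e 3 ^ 2 * e 6 + e 3 * e 4 * e 5
              + e 2 ^ 2 * e 3 * e 5 + e 2 ^ 2 * e 4 ^ 2 + e 3 ^ 4 + e 6 ^ 2)
          + (e 3 * e 5 * e 6 + e 4 * e 5 ^ 2 + e 2 ^ 2 * e 5 ^ 2
              + e 2 * e 3 ^ 2 * e 6 + e 2 * e 3 * e 4 * e 5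
              + e 3 ^ 3 * e 5 + e 3 ^ 2 * e 4 ^ 2)
          + (e 5 ^ 3 + e 2 * e 3 * e 5 ^ 2 + e 3 ^ 3 * e 6 + e 3 ^ 2 * e 4 * e 5))
      ∈ Ideal.span {e 1} := by
  set I : Ideal (MvPolynomial (Fin 6) (ZMod 2)) := Ideal.span {e 1} with hI
  have h2 : (2 : MvPolynomial (Fin 6) (ZMod 2) ⧸ I) = 0 := by
    have : (2 : MvPolynomial (Fin 6) (ZMod 2)) = 0 := CharTwo.two_eq_zero
    simpa only [map_ofNat, map_zero] using congrArg (Ideal.Quotient.mk I) this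
  rw [← Ideal.Quotient.eq_zero_iff_mem]
  rcases subsingleton_or_nontrivial (MvPolynomial (Fin 6) (ZMod 2) ⧸ I) with hsub | hnt
  · exact Subsingleton.elim _ _
  have : CharP (MvPolynomial (Fin 6) (ZMod 2) ⧸ I) 2 :=
    CharTwo.of_one_ne_zero_of_two_eq_zero one_ne_zero h2
  have h1 : Ideal.Quotient.mk I (e 1) = 0 :=
    Ideal.Quotient.eq_zero_iff_mem.2 (Ideal.subset_span rfl)
  rw [map_sub, sub_eq_zero, map_prod]
  simp only [map_add, map_mul, map_pow, map_one]
  exact hom_version (Ideal.Quotient.mk I) h1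
end

section
/- In 𝔽₂[t₁,…,t₆], the product over all 3-element subsets S of {1,…,6} of (1 + Σ_{i∈S} t_i) is congruent to 1 + e₂² + e₃² + (e₄² + e₂⁴) + e₅² + (e₆² + e₃⁴ + e₂⁶) + e₂⁴e₃² + (e₃²e₅² + e₂⁴e₄² + e₂²e₃⁴) + (e₂⁴e₅² + e₃⁶) + (e₅⁴ + e₂⁴e₆² + e₂²e₃²e₅² + e₃⁴e₄²) modulo the ideal generated by e₁. -/
open MvPolynomial Finset

lemma pc1 : (univ : Finset (Fin 6)).powersetCard 1 =
    {{0}, {1}, {2}, {3}, {4}, {5}} := by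
  decide +kernel

lemma pc2 : (univ : Finset (Fin 6)).powersetCard 2 =
    {{0, 1}, {0, 2}, {0, 3}, {0, 4}, {0, 5}, {1, 2}, {1, 3}, {1, 4}, {1, 5}, {2, 3}, {2, 4}, {2, 5}, {3, 4}, {3, 5}, {4, 5}} := by
  decide +kernel

lemma pc3 : (univ : Finset (Fin 6)).powersetCard 3 =
    {{0, 1, 2}, {0, 1, 3}, {0, 1, 4}, {0, 1, 5}, {0, 2, 3}, {0, 2, 4}, {0, 2, 5}, {0, 3, 4}, {0, 3, 5}, {0, 4, 5}, {1, 2, 3}, {1, 2, 4}, {1, 2, 5}, {1, 3, 4}, {1, 3, 5}, {1, 4, 5}, {2, 3, 4}, {2, 3, 5}, {2, 4, 5}, {3, 4, 5}} := by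
  decide +kernel

lemma pc4 : (univ : Finset (Fin 6)).powersetCard 4 =
    {{0, 1, 2, 3}, {0, 1, 2, 4}, {0, 1, 2, 5}, {0, 1, 3, 4}, {0, 1, 3, 5}, {0, 1, 4, 5}, {0, 2, 3, 4}, {0, 2, 3, 5}, {0, 2, 4, 5}, {0, 3, 4, 5}, {1, 2, 3, 4}, {1, 2, 3, 5}, {1, 2, 4, 5}, {1, 3, 4, 5}, {2, 3, 4, 5}} := by
  decide +kernel

lemma pc5 : (univ : Finset (Fin 6)).powersetCard 5 =
    {{0, 1, 2, 3, 4}, {0, 1, 2, 3, 5}, {0, 1, 2, 4, 5}, {0, 1, 3, 4, 5}, {0, 2, 3, 4, 5}, {1, 2, 3, 4, 5}} := by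
  decide +kernel

lemma pc6 : (univ : Finset (Fin 6)).powersetCard 6 =
    {{0, 1, 2, 3, 4, 5}} := by
  decide +kernel

lemma e1_eq : e 1 = X 0 + X 1 + X 2 + X 3 + X 4 + X 5 := by
  rw [e, esymm, pc1]
  repeat rw [Finset.sum_insert (by decide)]
  simp [Finset.prod_insert, mul_assoc, add_assoc]

lemma e2_eq : e 2 = X 0*X 1 + X 0*X 2 + X 0*X 3 + X 0*X 4 + X 0*X 5 + X 1*X 2 + X 1*X 3 + X 1*X 4 + X 1*X 5 + X 2*X 3 + X 2*X 4 + X 2*X 5 + X 3*X 4 + X 3*X 5 + X 4*X 5 := by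
  rw [e, esymm, pc2]
  repeat rw [Finset.sum_insert (by decide)]
  simp [Finset.prod_insert, mul_assoc, add_assoc]

lemma e3_eq : e 3 = X 0*X 1*X 2 + X 0*X 1*X 3 + X 0*X 1*X 4 + X 0*X 1*X 5 + X 0*X 2*X 3 + X 0*X 2*X 4 + X 0*X 2*X 5 + X 0*X 3*X 4 + X 0*X 3*X 5 + X 0*X 4*X 5 + X 1*X 2*X 3 + X 1*X 2*X 4 + X 1*X 2*X 5 + X 1*X 3*X 4 + X 1*X 3*X 5 + X 1*X 4*X 5 + X 2*X 3*X 4 + X 2*X 3*X 5 + X 2*X 4*X 5 + X 3*X 4*X 5 := by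
  rw [e, esymm, pc3]
  repeat rw [Finset.sum_insert (by decide)]
  simp [Finset.prod_insert, mul_assoc, add_assoc]

lemma e4_eq : e 4 = X 0*X 1*X 2*X 3 + X 0*X 1*X 2*X 4 + X 0*X 1*X 2*X 5 + X 0*X 1*X 3*X 4 + X 0*X 1*X 3*X 5 + X 0*X 1*X 4*X 5 + X 0*X 2*X 3*X 4 + X 0*X 2*X 3*X 5 + X 0*X 2*X 4*X 5 + X 0*X 3*X 4*X 5 + X 1*X 2*X 3*X 4 + X 1*X 2*X 3*X 5 + X 1*X 2*X 4*X 5 + X 1*X 3*X 4*X 5 + X 2*X 3*X 4*X 5 := by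
  rw [e, esymm, pc4]
  repeat rw [Finset.sum_insert (by decide)]
  simp [Finset.prod_insert, mul_assoc, add_assoc]

lemma e5_eq : e 5 = X 0*X 1*X 2*X 3*X 4 + X 0*X 1*X 2*X 3*X 5 + X 0*X 1*X 2*X 4*X 5 + X 0*X 1*X 3*X 4*X 5 + X 0*X 2*X 3*X 4*X 5 + X 1*X 2*X 3*X 4*X 5 := by
  rw [e, esymm, pc5]
  repeat rw [Finset.sum_insert (by decide)]
  simp [Finset.prod_insert, mul_assoc, add_assoc]

lemma e6_eq : e 6 = X 0*X 1*X 2*X 3*X 4*X 5 := by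
  rw [e, esymm, pc6]
  repeat rw [Finset.sum_insert (by decide)]
  simp [Finset.prod_insert, mul_assoc, add_assoc]

lemma prod_eq : (∏ s ∈ (univ : Finset (Fin 6)).powersetCard 3,
        (1 + ∑ i ∈ s, X i) : MvPolynomial (Fin 6) (ZMod 2)) = (1 + (X 0 + X 1 + X 2)) * (1 + (X 0 + X 1 + X 3)) * (1 + (X 0 + X 1 + X 4)) * (1 + (X 0 + X 1 + X 5)) * (1 + (X 0 + X 2 + X 3)) * (1 + (X 0 + X 2 + X 4)) * (1 + (X 0 + X 2 + X 5)) * (1 + (X 0 + X 3 + X 4)) * (1 + (X 0 + X 3 + X 5)) * (1 + (X 0 + X 4 + X 5)) * (1 + (X 1 + X 2 + X 3)) * (1 + (X 1 + X 2 + X 4)) * (1 + (X 1 + X 2 + X 5)) * (1 + (X 1 + X 3 + X 4)) * (1 + (X 1 + X 3 + X 5)) * (1 + (X 1 + X 4 + X 5)) * (1 + (X 2 + X 3 + X 4)) * (1 + (X 2 + X 3 + X 5)) * (1 + (X 2 + X 4 + X 5)) * (1 + (X 3 + X 4 + X 5)) := by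
  rw [pc3]
  repeat rw [Finset.prod_insert (by decide)]
  simp [Finset.sum_insert, mul_assoc, add_assoc]

lemma cubicResolvent {R : Type*} [CommRing R] (h2 : (2 : R) = 0) (u a b c d : R) :
    (u + (a + b) * (c + d)) * (u + (a + c) * (b + d)) * (u + (a + d) * (b + c)) =
      u ^ 3 + u * ((a*b+a*c+a*d+b*c+b*d+c*d) ^ 2
        + (a+b+c+d) * (a*b*c+a*b*d+a*c*d+b*c*d))
      + (a+b+c+d) * (a*b+a*c+a*d+b*c+b*d+c*d) * (a*b*c+a*b*d+a*c*d+b*c*d)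
      + (a+b+c+d) ^ 2 * (a*b*c*d) + (a*b*c+a*b*d+a*c*d+b*c*d) ^ 2 := by
  linear_combination (u^2 * (a*b+a*c+a*d+b*c+b*d+c*d) - 2 * u * (a*b*c*d)
    - (a+b+c+d) ^ 2 * (a*b*c*d) - (a*b*c+a*b*d+a*c*d+b*c*d) ^ 2) * h2

lemma half {R : Type*} [CommRing R] (h2 : (2 : R) = 0) (a b g2 g3 g4 : R) :
    ((1+a+b)^4 + (a+b)*(1+a+b)^3 + g2*(1+a+b)^2 + g3*(1+a+b) + g4) * (((1+a)*(1+b))^3 + (1+a)*(1+b)*(g2^2 + (a+b)*g3) + (a+b)*g2*g3 + (a+b)^2*g4 + g3^2) =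
    1 + (a*b+(a+b)*(a+b)+g2) + (a*b*(a+b)+(a+b)*g2+g3) + ((a*b*g2+(a+b)*g3+g4) + (a*b+(a+b)*(a+b)+g2)^2) + (a*b*g3+(a+b)*g4) + ((a*b*g4) + (a*b*(a+b)+(a+b)*g2+g3)^2 + (a*b+(a+b)*(a+b)+g2)^3) + (a*b+(a+b)*(a+b)+g2)^2*(a*b*(a+b)+(a+b)*g2+g3) + ((a*b*(a+b)+(a+b)*g2+g3)*(a*b*g3+(a+b)*g4) + (a*b+(a+b)*(a+b)+g2)^2*(a*b*g2+(a+b)*g3+g4) + (a*b+(a+b)*(a+b)+g2)*(a*b*(a+b)+(a+b)*g2+g3)^2) + ((a*b+(a+b)*(a+b)+g2)^2*(a*b*g3+(a+b)*g4) + (a*b*(a+b)+(a+b)*g2+g3)^3) + ((a*b*g3+(a+b)*g4)^2 + (a*b+(a+b)*(a+b)+g2)^2*(a*b*g4) + (a*b+(a+b)*(a+b)+g2)*(a*b*(a+b)+(a+b)*g2+g3)*(a*b*g3+(a+b)*g4) + (a*b*(a+b)+(a+b)*g2+g3)^2*(a*b*g2+(a+b)*g3+g4)) := by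
  linear_combination ((1)*a^7*b^3 + (3)*a^7*b^2 + (18)*a^6*b^3 + (31)*a^6*b^2 + (3)*a^7*b^1 + (23)*a^6*b^1 +
    (101)*a^5*b^3 + (124)*a^5*b^2 + (72)*a^5*b^1 + (1)*a^7 + (6)*a^6 + (18)*a^5 + (266)*a^4*b^3 +
    (253)*a^4*b^2 + (135)*a^4*b^1 + (27)*a^4 + (1)*a^5*b^1*g2^2 + (1)*a^6*b^1*g3^1 +
    (4)*a^5*b^2*g3^1 + (1)*a^5*g2^2 + (1)*a^6*g3^1 + (9)*a^5*b^1*g3^1 + (7)*a^4*b^1*g2^2 +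
    (26)*a^4*b^2*g3^1 + (4)*a^4*g2^2 + (4)*a^5*g3^1 + (24)*a^4*b^1*g3^1 + (1)*a^5*g2^1*g3^1 +
    (4)*a^4*b^1*g2^1*g3^1 + (1)*a^6*g4^1 + (5)*a^5*b^1*g4^1 + (9)*a^4*b^2*g4^1 + (1)*a^4*g3^2 +
    (374)*a^3*b^3 + (324)*a^3*b^2 + (137)*a^3*b^1 + (25)*a^3 + (18)*a^3*b^1*g2^2 +
    (53)*a^3*b^2*g3^1 + (7)*a^3*g2^2 + (8)*a^4*g3^1 + (38)*a^3*b^1*g3^1 + (4)*a^4*g2^1*g3^1 +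
    (13)*a^3*b^1*g2^1*g3^1 + (3)*a^5*g4^1 + (14)*a^4*b^1*g4^1 + (28)*a^3*b^2*g4^1 + (4)*a^3*g3^2 +
    (4)*a^6*b^4 + (39)*a^5*b^4 + (146)*a^4*b^4 + (266)*a^3*b^4 + (3)*a^4*b^2*g2^2 +
    (7)*a^4*b^3*g3^1 + (16)*a^3*b^2*g2^2 + (36)*a^3*b^3*g3^1 + (5)*a^3*b^2*g2^1*g3^1 +
    (10)*a^3*b^3*g4^1 + (3)*a^3*b^1*g3^2 + (324)*a^2*b^3 + (221)*a^2*b^2 + (85)*a^2*b^1 + (13)*a^2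
    + (22)*a^2*b^1*g2^2 + (61)*a^2*b^2*g3^1 + (5)*a^2*g2^2 + (9)*a^3*g3^1 + (31)*a^2*b^1*g3^1 +
    (4)*a^3*g2^1*g3^1 + (9)*a^2*b^1*g2^1*g3^1 + (4)*a^4*g4^1 + (16)*a^3*b^1*g4^1 +
    (25)*a^2*b^2*g4^1 + (5)*a^2*g3^2 + (253)*a^2*b^4 + (27)*a^2*b^2*g2^2 + (53)*a^2*b^3*g3^1 +
    (17)*a^2*b^2*g2^1*g3^1 + (28)*a^2*b^3*g4^1 + (11)*a^2*b^1*g3^2 + (6)*a^5*b^5 + (39)*a^4*b^5 +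
    (101)*a^3*b^5 + (124)*a^2*b^5 + (4)*a^3*b^3*g2^2 + (7)*a^3*b^4*g3^1 + (16)*a^2*b^3*g2^2 +
    (26)*a^2*b^4*g3^1 + (5)*a^2*b^3*g2^1*g3^1 + (9)*a^2*b^4*g4^1 + (3)*a^2*b^2*g3^2 + (137)*a^1*b^3
    + (85)*a^1*b^2 + (27)*a^1*b^1 + (4)*a^1 + (9)*a^1*b^1*g2^2 + (31)*a^1*b^2*g3^1 + (3)*a^1*g2^2 +
    (6)*a^2*g3^1 + (13)*a^1*b^1*g3^1 + (3)*a^2*g2^1*g3^1 + (5)*a^1*b^1*g2^1*g3^1 + (3)*a^3*g4^1 +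
    (12)*a^2*b^1*g4^1 + (12)*a^1*b^2*g4^1 + (3)*a^1*g3^2 + (135)*a^1*b^4 + (22)*a^1*b^2*g2^2 +
    (38)*a^1*b^3*g3^1 + (9)*a^1*b^2*g2^1*g3^1 + (16)*a^1*b^3*g4^1 + (9)*a^1*b^1*g3^2 + (72)*a^1*b^5
    + (18)*a^1*b^3*g2^2 + (24)*a^1*b^4*g3^1 + (13)*a^1*b^3*g2^1*g3^1 + (14)*a^1*b^4*g4^1 +
    (11)*a^1*b^2*g3^2 + (4)*a^4*b^6 + (18)*a^3*b^6 + (31)*a^2*b^6 + (23)*a^1*b^6 + (3)*a^2*b^4*g2^2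
    + (4)*a^2*b^5*g3^1 + (7)*a^1*b^4*g2^2 + (9)*a^1*b^5*g3^1 + (4)*a^1*b^4*g2^1*g3^1 +
    (5)*a^1*b^5*g4^1 + (3)*a^1*b^3*g3^2 + (25)*b^3 + (13)*b^2 + (4)*b^1 + (3)*b^1*g2^2 +
    (6)*b^2*g3^1 + (2)*a^1*g3^1 + (2)*b^1*g3^1 + (2)*a^2*g4^1 + (5)*a^1*b^1*g4^1 + (2)*b^2*g4^1 +
    (27)*b^4 + (5)*b^2*g2^2 + (9)*b^3*g3^1 + (3)*b^2*g2^1*g3^1 + (3)*b^3*g4^1 + (3)*b^1*g3^2 +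
    (18)*b^5 + (7)*b^3*g2^2 + (8)*b^4*g3^1 + (4)*b^3*g2^1*g3^1 + (4)*b^4*g4^1 + (5)*b^2*g3^2 +
    (6)*b^6 + (4)*b^4*g2^2 + (4)*b^5*g3^1 + (4)*b^4*g2^1*g3^1 + (3)*b^5*g4^1 + (4)*b^3*g3^2 +
    (1)*a^3*b^7 + (3)*a^2*b^7 + (3)*a^1*b^7 + (1)*b^7 + (1)*a^1*b^5*g2^2 + (1)*a^1*b^6*g3^1 +
    (1)*b^5*g2^2 + (1)*b^6*g3^1 + (1)*b^5*g2^1*g3^1 + (1)*b^6*g4^1 + (1)*b^4*g3^2 +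
    (1)*a^4*b^3*g2^1 + (2)*a^4*b^2*g2^1 + (4)*a^4*b^1*g2^1 + (4)*a^3*b^3*g2^1 + (15)*a^3*b^2*g2^1 +
    (9)*a^3*b^1*g2^1 + (1)*a^4*g2^1 + (5)*a^3*g2^1 + (15)*a^2*b^3*g2^1 + (16)*a^2*b^2*g2^1 +
    (21)*a^2*b^1*g2^1 + (4)*a^2*g2^1 + (1)*a^2*b^1*g2^3 + (1)*a^2*g2^3 + (-1)*a^2*b^1*g2^2*g3^1 +
    (-3)*a^3*b^1*g2^1*g4^1 + (-7)*a^2*b^2*g2^1*g4^1 + (9)*a^1*b^3*g2^1 + (21)*a^1*b^2*g2^1 +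
    (8)*a^1*b^1*g2^1 + (2)*a^1*g2^1 + (2)*a^1*b^1*g2^3 + (1)*a^1*g2^3 + (-1)*a^2*b^1*g2^1*g4^1 +
    (-1)*a^1*b^2*g2^1*g4^1 + (1)*a^3*b^4*g2^1 + (2)*a^2*b^4*g2^1 + (4)*a^1*b^4*g2^1 +
    (1)*a^1*b^2*g2^3 + (-1)*a^1*b^2*g2^2*g3^1 + (-3)*a^1*b^3*g2^1*g4^1 + (-1)*a^1*b^1*g2^1*g3^2 +
    (5)*b^3*g2^1 + (4)*b^2*g2^1 + (2)*b^1*g2^1 + (1)*b^1*g2^3 + (-1)*a^2*g2^1*g4^1 +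
    (-3)*a^1*b^1*g2^1*g4^1 + (-1)*b^2*g2^1*g4^1 + (1)*b^4*g2^1 + (1)*b^2*g2^3 +
    (-2)*a^2*b^1*g3^1*g4^1 + (-2)*a^1*b^2*g3^1*g4^1 + (1)*a^2*g3^1*g4^1 + (2)*a^1*b^1*g3^1*g4^1 +
    (1)*b^2*g3^1*g4^1 + (1)*a^1*g4^1 + (1)*b^1*g4^1 + (-2)*a^1*b^1*g2^2*g4^1 +
    (-1)*a^1*g2^1*g3^1*g4^1 + (-1)*b^1*g2^1*g3^1*g4^1 + (-1)*a^2*g2^2*g4^1 + (-1)*b^2*g2^2*g4^1) * h2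

lemma ten {R : Type*} [CommRing R] (h2 : (2 : R) = 0) (a b c d f g : R)
    (h : a + b + c + d + f + g = 0) :
    ((1 + a + b + c) * (1 + a + b + d) * (1 + a + b + f) * (1 + a + b + g)) *
    (((1 + a + c + d) * (1 + a + f + g)) * ((1 + a + c + f) * (1 + a + d + g)) *
      ((1 + a + c + g) * (1 + a + d + f))) =
    1 + (a*b + a*c + a*d + a*f + a*g + b*c + b*d + b*f + b*g + c*d + c*f + c*g + d*f + d*g + f*g) + (a*b*c + a*b*d + a*b*f + a*b*g + a*c*d + a*c*f + a*c*g + a*d*f + a*d*g + a*f*g + b*c*d + b*c*f + b*c*g + b*d*f + b*d*g + b*f*g + c*d*f + c*d*g + c*f*g + d*f*g) + ((a*b*c*d + a*b*c*f + a*b*c*g + a*b*d*f + a*b*d*g + a*b*f*g + a*c*d*f + a*c*d*g + a*c*f*g + a*d*f*g + b*c*d*f + b*c*d*g + b*c*f*g + b*d*f*g + c*d*f*g) + (a*b + a*c + a*d + a*f + a*g + b*c + b*d + b*f + b*g + c*d + c*f + c*g + d*f + d*g + f*g)^2) + (a*b*c*d*f + a*b*c*d*g + a*b*c*f*g + a*b*d*f*g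 + a*c*d*f*g + b*c*d*f*g) + ((a*b*c*d*f*g) + (a*b*c + a*b*d + a*b*f + a*b*g + a*c*d + a*c*f + a*c*g + a*d*f + a*d*g + a*f*g + b*c*d + b*c*f + b*c*g + b*d*f + b*d*g + b*f*g + c*d*f + c*d*g + c*f*g + d*f*g)^2 + (a*b + a*c + a*d + a*f + a*g + b*c + b*d + b*f + b*g + c*d + c*f + c*g + d*f + d*g + f*g)^3) + (a*b + a*c + a*d + a*f + a*g + b*c + b*d + b*f + b*g + c*d + c*f + c*g + d*f + d*g + f*g)^2*(a*b*c + a*b*d + a*b*f + a*b*g + a*c*d + a*c*f + a*c*g + a*d*f + a*d*g + a*f*g + b*c*d + b*c*f + b*c*g + b*d*f + b*d*g + b*f*g + c*d*f + c*d*g + c*f*g + d*f*g) + ((a*b*c + a*b*d + a*b*f + a*b*g + a*c*d + a*c*f + a*c*g + a*d*f + a*d*g + a*f*g + b*c*d + b*c*f + b*c*g + b*d*f + b*d*g + b*f*g + c*d*f + c*d*g + c*f*g + d*f*g)*(a*b*c*d*f + a*b*c*d*g + a*b*c*f*g + a*b*d*f*g + a*c*d*f*g + b*c*d*f*g) + (a*b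 + a*c + a*d + a*f + a*g + b*c + b*d + b*f + b*g + c*d + c*f + c*g + d*f + d*g + f*g)^2*(a*b*c*d + a*b*c*f + a*b*c*g + a*b*d*f + a*b*d*g + a*b*f*g + a*c*d*f + a*c*d*g + a*c*f*g + a*d*f*g + b*c*d*f + b*c*d*g + b*c*f*g + b*d*f*g + c*d*f*g) + (a*b + a*c + a*d + a*f + a*g + b*c + b*d + b*f + b*g + c*d + c*f + c*g + d*f + d*g + f*g)*(a*b*c + a*b*d + a*b*f + a*b*g + a*c*d + a*c*f + a*c*g + a*d*f + a*d*g + a*f*g + b*c*d + b*c*f + b*c*g + b*d*f + b*d*g + b*f*g + c*d*f + c*d*g + c*f*g + d*f*g)^2) + ((a*b + a*c + a*d + a*f + a*g + b*c + b*d + b*f + b*g + c*d + c*f + c*g + d*f + d*g + f*g)^2*(a*b*c*d*f + a*b*c*d*g + a*b*c*f*g + a*b*d*f*g + a*c*d*f*g + b*c*d*f*g) + (a*b*c + a*b*d + a*b*f + a*b*g + a*c*d + a*c*f + a*c*g + a*d*f + a*d*g + a*f*g + b*c*d + b*c*f + b*c*g + b*d*f + b*d*g + b*f*g + c*d*f +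 c*d*g + c*f*g + d*f*g)^3) + ((a*b*c*d*f + a*b*c*d*g + a*b*c*f*g + a*b*d*f*g + a*c*d*f*g + b*c*d*f*g)^2 + (a*b + a*c + a*d + a*f + a*g + b*c + b*d + b*f + b*g + c*d + c*f + c*g + d*f + d*g + f*g)^2*(a*b*c*d*f*g) + (a*b + a*c + a*d + a*f + a*g + b*c + b*d + b*f + b*g + c*d + c*f + c*g + d*f + d*g + f*g)*(a*b*c + a*b*d + a*b*f + a*b*g + a*c*d + a*c*f + a*c*g + a*d*f + a*d*g + a*f*g + b*c*d + b*c*f + b*c*g + b*d*f + b*d*g + b*f*g + c*d*f + c*d*g + c*f*g + d*f*g)*(a*b*c*d*f + a*b*c*d*g + a*b*c*f*g + a*b*d*f*g + a*c*d*f*g + b*c*d*f*g) + (a*b*c + a*b*d + a*b*f + a*b*g + a*c*d + a*c*f + a*c*g + a*d*f + a*d*g + a*f*g + b*c*d + b*c*f + b*c*g + b*d*f + b*d*g + b*f*g + c*d*f + c*d*g + c*f*g + d*f*g)^2*(a*b*c*d + a*b*c*f + a*b*c*g + a*b*d*f + a*b*d*g + a*b*f*g + a*c*d*f + a*c*d*g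 + a*c*f*g + a*d*f*g + b*c*d*f + b*c*d*g + b*c*f*g + b*d*f*g + c*d*f*g)) := by
  have hg : c + d + f + g = a + b := by linear_combination h - (a + b) * h2
  obtain ⟨g2, hg2⟩ : ∃ x, x = c*d + c*f + c*g + d*f + d*g + f*g := ⟨_, rfl⟩
  obtain ⟨g3, hg3⟩ : ∃ x, x = c*d*f + c*d*g + c*f*g + d*f*g := ⟨_, rfl⟩
  obtain ⟨g4, hg4⟩ : ∃ x, x = c*d*f*g := ⟨_, rfl⟩
  have e2 : (a*b + a*c + a*d + a*f + a*g + b*c + b*d + b*f + b*g + c*d + c*f + c*g + d*f + d*g + f*g) = (a*b+(a+b)*(a+b)+g2) := by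
    rw [hg2]; linear_combination (a + b) * hg
  have e3 : (a*b*c + a*b*d + a*b*f + a*b*g + a*c*d + a*c*f + a*c*g + a*d*f + a*d*g + a*f*g + b*c*d + b*c*f + b*c*g + b*d*f + b*d*g + b*f*g + c*d*f + c*d*g + c*f*g + d*f*g) = (a*b*(a+b)+(a+b)*g2+g3) := by
    rw [hg2, hg3]; linear_combination (a * b) * hg
  have e4 : (a*b*c*d + a*b*c*f + a*b*c*g + a*b*d*f + a*b*d*g + a*b*f*g + a*c*d*f + a*c*d*g + a*c*f*g + a*d*f*g + b*c*d*f + b*c*d*g + b*c*f*g + b*d*f*g + c*d*f*g) = (a*b*g2+(a+b)*g3+g4) := by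
    rw [hg2, hg3, hg4]; ring
  have e5 : (a*b*c*d*f + a*b*c*d*g + a*b*c*f*g + a*b*d*f*g + a*c*d*f*g + b*c*d*f*g) = (a*b*g3+(a+b)*g4) := by
    rw [hg3, hg4]; ring
  have e6 : (a*b*c*d*f*g) = (a*b*g4) := by
    rw [hg4]; ring
  rw [e2, e3, e4, e5, e6, ← half h2]
  have p1 : (1 + a + b + c) * (1 + a + b + d) * (1 + a + b + f) * (1 + a + b + g) =
      (1+a+b)^4 + (a+b)*(1+a+b)^3 + g2*(1+a+b)^2 + g3*(1+a+b) + g4 := by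
    rw [hg2, hg3, hg4]; linear_combination (1+a+b)^3 * hg
  have q1 : (1 + a + c + d) * (1 + a + f + g) = (1+a)*(1+b) + (c+d)*(f+g) := by
    linear_combination (1 + a) * hg + (1 + a) * a * h2
  have q2 : (1 + a + c + f) * (1 + a + d + g) = (1+a)*(1+b) + (c+f)*(d+g) := by
    linear_combination (1 + a) * hg + (1 + a) * a * h2
  have q3 : (1 + a + c + g) * (1 + a + d + f) = (1+a)*(1+b) + (c+g)*(d+f) := by
    linear_combination (1 + a) * hg + (1 + a) * a * h2
  rw [p1, q1, q2, q3, cubicResolvent h2, hg, ← hg2, ← hg3, ← hg4]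

/-- Square of a sum in characteristic two. -/
lemma sq_add {R : Type*} [CommRing R] (h2 : (2 : R) = 0) (x y : R) :
    (x + y) ^ 2 = x ^ 2 + y ^ 2 := by
  linear_combination x * y * h2

lemma sq_rhs {R : Type*} [CommRing R] (h2 : (2 : R) = 0) (e2 e3 e4 e5 e6 : R) :
    (1 + e2 + e3 + (e4 + e2^2) + e5 + (e6 + e3^2 + e2^3) + e2^2*e3 + (e3*e5 + e2^2*e4 + e2*e3^2) + (e2^2*e5 + e3^3) + (e5^2 + e2^2*e6 + e2*e3*e5 + e3^2*e4)) ^ 2 =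
    1 + e2 ^ 2 + e3 ^ 2 + (e4 ^ 2 + e2 ^ 4) + e5 ^ 2
          + (e6 ^ 2 + e3 ^ 4 + e2 ^ 6)
          + e2 ^ 4 * e3 ^ 2
          + (e3 ^ 2 * e5 ^ 2 + e2 ^ 4 * e4 ^ 2 + e2 ^ 2 * e3 ^ 4)
          + (e2 ^ 4 * e5 ^ 2 + e3 ^ 6)
          + (e5 ^ 4 + e2 ^ 4 * e6 ^ 2 + e2 ^ 2 * e3 ^ 2 * e5 ^ 2
              + e3 ^ 4 * e4 ^ 2) := by
  simp only [sq_add h2, mul_pow, ← pow_mul]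
  norm_num

lemma twenty {R : Type*} [CommRing R] (h2 : (2 : R) = 0) (a b c d f g : R)
    (h : a + b + c + d + f + g = 0) :
    (1 + (a + b + c)) * (1 + (a + b + d)) * (1 + (a + b + f)) * (1 + (a + b + g)) * (1 + (a + c + d)) * (1 + (a + c + f)) * (1 + (a + c + g)) * (1 + (a + d + f)) * (1 + (a + d + g)) * (1 + (a + f + g)) * (1 + (b + c + d)) * (1 + (b + c + f)) * (1 + (b + c + g)) * (1 + (b + d + f)) * (1 + (b + d + g)) * (1 + (b + f + g)) * (1 + (c + d + f)) * (1 + (c + d + g)) * (1 + (c + f + g)) * (1 + (d + f + g)) =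
    1 + (a*b + a*c + a*d + a*f + a*g + b*c + b*d + b*f + b*g + c*d + c*f + c*g + d*f + d*g + f*g) ^ 2 + (a*b*c + a*b*d + a*b*f + a*b*g + a*c*d + a*c*f + a*c*g + a*d*f + a*d*g + a*f*g + b*c*d + b*c*f + b*c*g + b*d*f + b*d*g + b*f*g + c*d*f + c*d*g + c*f*g + d*f*g) ^ 2 + ((a*b*c*d + a*b*c*f + a*b*c*g + a*b*d*f + a*b*d*g + a*b*f*g + a*c*d*f + a*c*d*g + a*c*f*g + a*d*f*g + b*c*d*f + b*c*d*g + b*c*f*g + b*d*f*g + c*d*f*g) ^ 2 + (a*b + a*c + a*d + a*f + a*g + b*c + b*d + b*f + b*g + c*d + c*f + c*g + d*f + d*g + f*g) ^ 4) + (a*b*c*d*f + a*b*c*d*g + a*b*c*f*g + a*b*d*f*g + a*c*d*f*g + b*c*d*f*g) ^ 2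
          + ((a*b*c*d*f*g) ^ 2 + (a*b*c + a*b*d + a*b*f + a*b*g + a*c*d + a*c*f + a*c*g + a*d*f + a*d*g + a*f*g + b*c*d + b*c*f + b*c*g + b*d*f + b*d*g + b*f*g + c*d*f + c*d*g + c*f*g + d*f*g) ^ 4 + (a*b + a*c + a*d + a*f + a*g + b*c + b*d + b*f + b*g + c*d + c*f + c*g + d*f + d*g + f*g) ^ 6)
          + (a*b + a*c + a*d + a*f + a*g + b*c + b*d + b*f + b*g + c*d + c*f + c*g + d*f + d*g + f*g) ^ 4 * (a*b*c + a*b*d + a*b*f + a*b*g + a*c*d + a*c*f + a*c*g + a*d*f + a*d*g + a*f*g + b*c*d + b*c*f + b*c*g + b*d*f + b*d*g + b*f*g + c*d*f + c*d*g + c*f*g + d*f*g) ^ 2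
          + ((a*b*c + a*b*d + a*b*f + a*b*g + a*c*d + a*c*f + a*c*g + a*d*f + a*d*g + a*f*g + b*c*d + b*c*f + b*c*g + b*d*f + b*d*g + b*f*g + c*d*f + c*d*g + c*f*g + d*f*g) ^ 2 * (a*b*c*d*f + a*b*c*d*g + a*b*c*f*g + a*b*d*f*g + a*c*d*f*g + b*c*d*f*g) ^ 2 + (a*b + a*c + a*d + a*f + a*g + b*c + b*d + b*f + b*g + c*d + c*f + c*g + d*f + d*g + f*g) ^ 4 * (a*b*c*d + a*b*c*f + a*b*c*g + a*b*d*f + a*b*d*g + a*b*f*g + a*c*d*f + a*c*d*g + a*c*f*g + a*d*f*g + b*c*d*f + b*c*d*g + b*c*f*g + b*d*f*g + c*d*f*g) ^ 2 + (a*b + a*c + a*d + a*f + a*g + b*c + b*d + b*f + b*g + c*d + c*f + c*g + d*f + d*g + f*g) ^ 2 * (a*b*c + a*b*d + a*b*f + a*b*g + a*c*d + a*c*f + a*c*g + a*d*f + a*d*g + a*f*g + b*c*d + b*c*f + b*c*g + b*d*f + b*d*g + b*f*g + c*d*f + c*d*g + c*f*g + d*f*g) ^ 4)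
          + ((a*b + a*c + a*d + a*f + a*g + b*c + b*d + b*f + b*g + c*d + c*f + c*g + d*f + d*g + f*g) ^ 4 * (a*b*c*d*f + a*b*c*d*g + a*b*c*f*g + a*b*d*f*g + a*c*d*f*g + b*c*d*f*g) ^ 2 + (a*b*c + a*b*d + a*b*f + a*b*g + a*c*d + a*c*f + a*c*g + a*d*f + a*d*g + a*f*g + b*c*d + b*c*f + b*c*g + b*d*f + b*d*g + b*f*g + c*d*f + c*d*g + c*f*g + d*f*g) ^ 6)
          + ((a*b*c*d*f + a*b*c*d*g + a*b*c*f*g + a*b*d*f*g + a*c*d*f*g + b*c*d*f*g) ^ 4 + (a*b + a*c + a*d + a*f + a*g + b*c + b*d + b*f + b*g + c*d + c*f + c*g + d*f + d*g + f*g) ^ 4 * (a*b*c*d*f*g) ^ 2 + (a*b + a*c + a*d + a*f + a*g + b*c + b*d + b*f + b*g + c*d + c*f + c*g + d*f + d*g + f*g) ^ 2 * (a*b*c + a*b*d + a*b*f + a*b*g + a*c*d + a*c*f + a*c*g + a*d*f + a*d*g + a*f*g + b*c*d + b*c*f + b*c*g + b*d*f + b*d*g + b*f*g + c*d*f + c*d*g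 + c*f*g + d*f*g) ^ 2 * (a*b*c*d*f + a*b*c*d*g + a*b*c*f*g + a*b*d*f*g + a*c*d*f*g + b*c*d*f*g) ^ 2
              + (a*b*c + a*b*d + a*b*f + a*b*g + a*c*d + a*c*f + a*c*g + a*d*f + a*d*g + a*f*g + b*c*d + b*c*f + b*c*g + b*d*f + b*d*g + b*f*g + c*d*f + c*d*g + c*f*g + d*f*g) ^ 4 * (a*b*c*d + a*b*c*f + a*b*c*g + a*b*d*f + a*b*d*g + a*b*f*g + a*c*d*f + a*c*d*g + a*c*f*g + a*d*f*g + b*c*d*f + b*c*d*g + b*c*f*g + b*d*f*g + c*d*f*g) ^ 2) := by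
  rw [← sq_rhs h2, ← ten h2 a b c d f g h]
  have k0 : (1 + (d + f + g)) = (1 + (a + b + c)) := by
    linear_combination h - (a + b + c) * h2
  have k1 : (1 + (c + f + g)) = (1 + (a + b + d)) := by
    linear_combination h - (a + b + d) * h2
  have k2 : (1 + (c + d + g)) = (1 + (a + b + f)) := by
    linear_combination h - (a + b + f) * h2
  have k3 : (1 + (c + d + f)) = (1 + (a + b + g)) := by
    linear_combination h - (a + b + g) * h2
  have k4 : (1 + (b + f + g)) = (1 + (a + c + d)) := by
    linear_combination h - (a + c + d) * h2
  have k5 : (1 + (b + d + g)) = (1 + (a + c + f)) := by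
    linear_combination h - (a + c + f) * h2
  have k6 : (1 + (b + d + f)) = (1 + (a + c + g)) := by
    linear_combination h - (a + c + g) * h2
  have k7 : (1 + (b + c + g)) = (1 + (a + d + f)) := by
    linear_combination h - (a + d + f) * h2
  have k8 : (1 + (b + c + f)) = (1 + (a + d + g)) := by
    linear_combination h - (a + d + g) * h2
  have k9 : (1 + (b + c + d)) = (1 + (a + f + g)) := by
    linear_combination h - (a + f + g) * h2
  rw [k0, k1, k2, k3, k4, k5, k6, k7, k8, k9]
  simp only [← add_assoc]
  generalize 1 + a + b + c = x0, 1 + a + b + d = x1, 1 + a + b + f = x2, 1 + a + b + g = x3,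
    1 + a + c + d = x4, 1 + a + c + f = x5, 1 + a + c + g = x6, 1 + a + d + f = x7,
    1 + a + d + g = x8, 1 + a + f + g = x9
  ring

lemma hom_eq {R : Type*} [CommRing R] (φ : MvPolynomial (Fin 6) (ZMod 2) →+* R)
    (h1 : φ (e 1) = 0) : φ (
    (∏ s ∈ (univ : Finset (Fin 6)).powersetCard 3,
        (1 + ∑ i ∈ s, X i) : MvPolynomial (Fin 6) (ZMod 2))
      - (1 + e 2 ^ 2 + e 3 ^ 2 + (e 4 ^ 2 + e 2 ^ 4) + e 5 ^ 2
          + (e 6 ^ 2 + e 3 ^ 4 + e 2 ^ 6)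
          + e 2 ^ 4 * e 3 ^ 2
          + (e 3 ^ 2 * e 5 ^ 2 + e 2 ^ 4 * e 4 ^ 2 + e 2 ^ 2 * e 3 ^ 4)
          + (e 2 ^ 4 * e 5 ^ 2 + e 3 ^ 6)
          + (e 5 ^ 4 + e 2 ^ 4 * e 6 ^ 2 + e 2 ^ 2 * e 3 ^ 2 * e 5 ^ 2
              + e 3 ^ 4 * e 4 ^ 2))
) = 0 := by
  have h2 : (2 : R) = 0 := by
    have h : (2 : MvPolynomial (Fin 6) (ZMod 2)) = 0 := CharTwo.two_eq_zero
    rw [← map_ofNat φ 2, h, map_zero]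
  rw [map_sub, sub_eq_zero]
  rw [e1_eq] at h1
  simp only [map_add] at h1
  rw [prod_eq, e2_eq, e3_eq, e4_eq, e5_eq, e6_eq]
  simp only [map_add, map_mul, map_pow, map_one]
  exact twenty h2 _ _ _ _ _ _ h1

/-- in `𝔽₂[t₁,…,t₆]`, the product over all 3-element subsets `S`
of `{1,…,6}` of `(1 + Σ_{i∈S} t_i)` is congruent to the displayed polynomial
in `e₂,…,e₆` modulo the ideal `(e₁)`; this is the mod 2 total Chern class of
`λ³ : SU(6) → SU(20)`. -/
theorem chern_lambda3_SU6 :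
    (∏ s ∈ (univ : Finset (Fin 6)).powersetCard 3,
        (1 + ∑ i ∈ s, X i) : MvPolynomial (Fin 6) (ZMod 2))
      - (1 + e 2 ^ 2 + e 3 ^ 2 + (e 4 ^ 2 + e 2 ^ 4) + e 5 ^ 2
          + (e 6 ^ 2 + e 3 ^ 4 + e 2 ^ 6)
          + e 2 ^ 4 * e 3 ^ 2
          + (e 3 ^ 2 * e 5 ^ 2 + e 2 ^ 4 * e 4 ^ 2 + e 2 ^ 2 * e 3 ^ 4)
          + (e 2 ^ 4 * e 5 ^ 2 + e 3 ^ 6)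
          + (e 5 ^ 4 + e 2 ^ 4 * e 6 ^ 2 + e 2 ^ 2 * e 3 ^ 2 * e 5 ^ 2
              + e 3 ^ 4 * e 4 ^ 2))
      ∈ Ideal.span {e 1} := by
  rw [← Ideal.Quotient.eq_zero_iff_mem]
  exact hom_eq _ (Ideal.Quotient.eq_zero_iff_mem.mpr (Ideal.subset_span rfl))
end
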